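/- In the damped model, assume additionally that C has all entries positive and that 2·(L⁺(g₁) + L⁺(g₂)) < 1 − τ_B(C). Then f has a unique fixed point x* ∈ int(Σ) and for every x ∈ int(Σ) the iterates f^s(x) converge to x* as s → ∞. -/

import Mathlib

open Set Matrix Filter Topology

/-- A weight function for the damped model: either admissible or the constant `1`. -/
def IsWeight (g g' : ℝ → ℝ) : Prop :=
  (∀ x ∈ Set.Icc (0:ℝ) 1, HasDerivWithinAt g (g' x) (Set.Icc (0:ℝ) 1) x) ∧
  ContinuousOn g' (Set.Icc (0:ℝ) 1) ∧
  g 0 = 1 ∧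
  (∀ x ∈ Set.Icc (0:ℝ) 1, 0 < g x) ∧
  ((∀ x ∈ Set.Icc (0:ℝ) 1, 0 < g' x) ∨
    ((∀ x ∈ Set.Icc (0:ℝ) 1, g x = 1) ∧ ∀ x ∈ Set.Icc (0:ℝ) 1, g' x = 0))

/-- The set of values `g'(x)/g(x)` for `x ∈ [0,1]`; its maximum is `L⁺(g)`. -/
def ratioSet (g g' : ℝ → ℝ) : Set ℝ := (fun x => g' x / g x) '' Set.Icc (0:ℝ) 1

/-- The damped transition matrix. -/
noncomputable def Md {n : ℕ} (C : Matrix (Fin n) (Fin n) ℝ) (d : Fin n → ℝ)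
    (γ : ℝ) (g₁ g₂ : ℝ → ℝ) (x : Fin n → ℝ) : Matrix (Fin n) (Fin n) ℝ :=
  Matrix.of fun i j =>
    γ * (C i j * g₁ (x j) / ∑ k, C i k * g₁ (x k)) +
    (1 - γ) * (d j * g₂ (x j) / ∑ k, d k * g₂ (x k))

/-- The map `f(x) = x · M(x)` of the damped model. -/
noncomputable def fd {n : ℕ} (C : Matrix (Fin n) (Fin n) ℝ) (d : Fin n → ℝ)
    (γ : ℝ) (g₁ g₂ : ℝ → ℝ) (x : Fin n → ℝ) : Fin n → ℝ :=
  Matrix.vecMul x (Md C d γ g₁ g₂ x)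

/-- Hilbert's projective metric on positive vectors. -/
noncomputable def dH {n : ℕ} (x y : Fin n → ℝ) : ℝ :=
  ⨆ i, ⨆ j, Real.log ((x i * y j) / (y i * x j))

/-- The set of contraction ratios of `A` for Hilbert's projective metric; its least
upper bound is Birkhoff's coefficient of ergodicity `τ_B(A)`. -/
def birkhoffRatios {n : ℕ} (A : Matrix (Fin n) (Fin n) ℝ) : Set ℝ :=
  {r : ℝ | ∃ x y : Fin n → ℝ, (∀ i, 0 < x i) ∧ (∀ i, 0 < y i) ∧
    (∀ c : ℝ, x ≠ c • y) ∧
    r = dH (Matrix.vecMul x A) (Matrix.vecMul y A) / dH x y}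

lemma log_div_eq {a b c e : ℝ} (ha : 0 < a) (hb : 0 < b) (hc : 0 < c) (he : 0 < e) :
    Real.log ((a * b) / (c * e)) = (Real.log a - Real.log c) - (Real.log e - Real.log b) := by
  rw [Real.log_div (by positivity) (by positivity), Real.log_mul (by positivity) (by positivity),
    Real.log_mul (by positivity) (by positivity)]
  ring

lemma le_dH {n : ℕ} {x y : Fin n → ℝ} (hx : ∀ i, 0 < x i) (hy : ∀ i, 0 < y i) (i j : Fin n) :
    (Real.log (x i) - Real.log (y i)) - (Real.log (x j) - Real.log (y j)) ≤ dH x y := by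
  rw [← log_div_eq (hx i) (hy j) (hy i) (hx j)]
  unfold dH
  refine le_trans ?_ (le_ciSup (Set.finite_range _).bddAbove i)
  exact le_ciSup (f := fun j => Real.log ((x i * y j) / (y i * x j))) (Set.finite_range _).bddAbove j

lemma dH_le {n : ℕ} [Nonempty (Fin n)] {x y : Fin n → ℝ} (hx : ∀ i, 0 < x i) (hy : ∀ i, 0 < y i)
    {D : ℝ} (h : ∀ i j, (Real.log (x i) - Real.log (y i)) - (Real.log (x j) - Real.log (y j)) ≤ D) :
    dH x y ≤ D := by
  unfold dH
  refine ciSup_le fun i => ciSup_le fun j => ?_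
  rw [log_div_eq (hx i) (hy j) (hy i) (hx j)]
  exact h i j

lemma dH_nonneg' {n : ℕ} [Nonempty (Fin n)] {x y : Fin n → ℝ} (hx : ∀ i, 0 < x i)
    (hy : ∀ i, 0 < y i) : 0 ≤ dH x y := by
  have i : Fin n := Classical.arbitrary _
  have := le_dH hx hy i i
  linarith

/-- bounds on the log ratios for positive vectors with the same sum -/
lemma exists_ab {n : ℕ} [Nonempty (Fin n)] {x y : Fin n → ℝ} (hx : ∀ i, 0 < x i)
    (hy : ∀ i, 0 < y i) (hs : ∑ i, x i = ∑ i, y i) :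
    ∃ a b : ℝ, 0 ≤ a ∧ 0 ≤ b ∧ a + b ≤ dH x y ∧ (∀ i, Real.log (x i) - Real.log (y i) ≤ a) ∧
      (∀ i, Real.log (y i) - Real.log (x i) ≤ b) := by
  obtain ⟨i, hi⟩ := Finite.exists_max (fun i => Real.log (x i) - Real.log (y i))
  obtain ⟨j, hj⟩ := Finite.exists_max (fun i => Real.log (y i) - Real.log (x i))
  refine ⟨_, _, ?_, ?_, ?_, hi, hj⟩
  · obtain ⟨k, -, hk⟩ := Finset.exists_le_of_sum_le (s := Finset.univ) (Finset.univ_nonempty)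
      hs.ge
    exact le_trans (sub_nonneg.2 (Real.log_le_log (hy k) hk)) (hi k)
  · obtain ⟨k, -, hk⟩ := Finset.exists_le_of_sum_le (s := Finset.univ) (Finset.univ_nonempty)
      hs.le
    exact le_trans (sub_nonneg.2 (Real.log_le_log (hx k) hk)) (hj k)
  · have := le_dH hx hy i j
    linarith

lemma sub_le_of_log {x y a : ℝ} (hx : 0 < x) (hy : 0 < y) (hx1 : x ≤ 1) (ha : 0 ≤ a)
    (h : Real.log x - Real.log y ≤ a) : x - y ≤ a := by
  rcases le_total x y with hxy | hxy
  · linarith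
  · have h1 := Real.log_le_sub_one_of_pos (div_pos hy hx)
    rw [Real.log_div hy.ne' hx.ne'] at h1
    have h2 : (x - y) ≤ (x - y) / x := by
      rw [le_div_iff₀ hx]; nlinarith
    have h3 : (x - y) / x = 1 - y / x := by field_simp
    linarith

lemma ratio_nonneg {g g' : ℝ → ℝ} (hg : IsWeight g g') {x : ℝ} (hx : x ∈ Set.Icc (0:ℝ) 1) :
    0 ≤ g' x / g x := by
  obtain ⟨-, -, -, hp, h⟩ := hg
  refine div_nonneg ?_ (hp x hx).le
  rcases h with h | h
  · exact (h x hx).le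
  · exact (h.2 x hx).ge

lemma L_nonneg {g g' : ℝ → ℝ} (hg : IsWeight g g') {L : ℝ} (hL : IsGreatest (ratioSet g g') L) :
    0 ≤ L := by
  obtain ⟨⟨x, hx, rfl⟩, -⟩ := hL
  exact ratio_nonneg hg hx

lemma mvt_weight {g g' : ℝ → ℝ} (hg : IsWeight g g') {L : ℝ}
    (hL : IsGreatest (ratioSet g g') L) {x y : ℝ} (hx : x ∈ Set.Icc (0:ℝ) 1)
    (hy : y ∈ Set.Icc (0:ℝ) 1) (hxy : x < y) :
    0 ≤ Real.log (g y) - Real.log (g x) ∧ Real.log (g y) - Real.log (g x) ≤ L * (y - x) := by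
  have hcont : ContinuousOn g (Set.Icc 0 1) := fun z hz => (hg.1 z hz).continuousWithinAt
  have hp := hg.2.2.2.1
  obtain ⟨c, hc, hc'⟩ := exists_hasDerivAt_eq_slope (fun t => Real.log (g t))
    (fun t => g' t / g t) hxy
    (by
      refine ContinuousOn.mono (s := Set.Icc 0 1) ?_ (Set.Icc_subset_Icc hx.1 hy.2)
      exact hcont.log fun z hz => (hp z hz).ne')
    (by
      intro t ht
      have h0 : t ∈ Set.Icc (0:ℝ) 1 := ⟨hx.1.trans ht.1.le, ht.2.le.trans hy.2⟩
      have h1 : Set.Icc (0:ℝ) 1 ∈ 𝓝 t := Icc_mem_nhds (hx.1.trans_lt ht.1) (ht.2.trans_le hy.2)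
      exact ((hg.1 t h0).hasDerivAt h1).log (hp t h0).ne')
  have h0 : c ∈ Set.Icc (0:ℝ) 1 := ⟨hx.1.trans hc.1.le, hc.2.le.trans hy.2⟩
  have h1 := ratio_nonneg hg h0
  have h2 : g' c / g c ≤ L := hL.2 ⟨c, h0, rfl⟩
  have h3 : 0 < y - x := sub_pos.2 hxy
  have h4 : Real.log (g y) - Real.log (g x) = g' c / g c * (y - x) := by
    rw [hc']; field_simp
  rw [h4]
  exact ⟨by positivity, by gcongr⟩

lemma weight_le {g g' : ℝ → ℝ} (hg : IsWeight g g') {L : ℝ}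
    (hL : IsGreatest (ratioSet g g') L) {x y a : ℝ} (hx : x ∈ Set.Icc (0:ℝ) 1)
    (hy : y ∈ Set.Icc (0:ℝ) 1) (ha : 0 ≤ a) (h : x - y ≤ a) :
    g x ≤ Real.exp (L * a) * g y := by
  have hp := hg.2.2.2.1
  have hL0 := L_nonneg hg hL
  have key : Real.log (g x) - Real.log (g y) ≤ L * a := by
    rcases lt_trichotomy x y with hxy | hxy | hxy
    · have := (mvt_weight hg hL hx hy hxy).1
      have : 0 ≤ L * a := by positivity
      linarith
    · subst hxy
      have : 0 ≤ L * a := by positivity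
      linarith
    · have h1 := (mvt_weight hg hL hy hx hxy).2
      have : L * (x - y) ≤ L * a := by gcongr
      linarith
  rw [← Real.log_le_log_iff (hp x hx) (mul_pos (Real.exp_pos _) (hp y hy)),
    Real.log_mul (Real.exp_pos _).ne' (hp y hy).ne', Real.log_exp]
  linarith

/-- a normalised weighted row -/
lemma row_le {n : ℕ} {c u v : Fin n → ℝ} (hc : ∀ i, 0 < c i)
    (hu : ∀ i, 0 < u i) (hv : ∀ i, 0 < v i) {A B : ℝ}
    (h1 : ∀ i, u i ≤ Real.exp A * v i) (h2 : ∀ i, v i ≤ Real.exp B * u i) (j : Fin n) :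
    c j * u j / ∑ k, c k * u k ≤ Real.exp (A + B) * (c j * v j / ∑ k, c k * v k) := by
  have : Nonempty (Fin n) := ⟨j⟩
  have hsu : 0 < ∑ k, c k * u k :=
    Finset.sum_pos (fun i _ => mul_pos (hc i) (hu i)) Finset.univ_nonempty
  have hsv : 0 < ∑ k, c k * v k :=
    Finset.sum_pos (fun i _ => mul_pos (hc i) (hv i)) Finset.univ_nonempty
  have h3 : ∑ k, c k * v k ≤ Real.exp B * ∑ k, c k * u k := by
    rw [Finset.mul_sum]
    refine Finset.sum_le_sum fun k _ => ?_
    have := mul_le_mul_of_nonneg_left (h2 k) (hc k).le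
    linarith
  have h4 : c j * u j ≤ Real.exp A * (c j * v j) := by
    have := mul_le_mul_of_nonneg_left (h1 j) (hc j).le
    linarith
  rw [Real.exp_add, ← mul_div_assoc, div_le_div_iff₀ hsu hsv]
  have hcv := mul_pos (hc j) (hv j)
  calc c j * u j * ∑ k, c k * v k
      ≤ (Real.exp A * (c j * v j)) * (Real.exp B * ∑ k, c k * u k) := by gcongr
    _ = _ := by ring

lemma simplex_Icc {n : ℕ} {x : Fin n → ℝ} (hx : x ∈ stdSimplex ℝ (Fin n)) (i : Fin n) :
    x i ∈ Set.Icc (0:ℝ) 1 := by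
  refine ⟨hx.1 i, ?_⟩
  rw [← hx.2]
  exact Finset.single_le_sum (f := x) (fun k _ => hx.1 k) (Finset.mem_univ i)

lemma Md_pos {n : ℕ} {C : Matrix (Fin n) (Fin n) ℝ} (hC : ∀ i j, 0 < C i j)
    {d : Fin n → ℝ} (hd : ∀ i, 0 < d i) {γ : ℝ} (hγ0 : 0 < γ) (hγ1 : γ < 1)
    {g₁ g₁' g₂ g₂' : ℝ → ℝ} (hg₁ : IsWeight g₁ g₁') (hg₂ : IsWeight g₂ g₂')
    {x : Fin n → ℝ} (hx : x ∈ stdSimplex ℝ (Fin n)) (i j : Fin n) :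
    0 < Md C d γ g₁ g₂ x i j := by
  have : Nonempty (Fin n) := ⟨j⟩
  have p1 : ∀ k, 0 < g₁ (x k) := fun k => hg₁.2.2.2.1 _ (simplex_Icc hx k)
  have p2 : ∀ k, 0 < g₂ (x k) := fun k => hg₂.2.2.2.1 _ (simplex_Icc hx k)
  have s1 : 0 < ∑ k, C i k * g₁ (x k) :=
    Finset.sum_pos (fun k _ => mul_pos (hC i k) (p1 k)) Finset.univ_nonempty
  have s2 : 0 < ∑ k, d k * g₂ (x k) :=
    Finset.sum_pos (fun k _ => mul_pos (hd k) (p2 k)) Finset.univ_nonempty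
  have := p1 j; have := p2 j; have := hC i j; have := hd j
  have : 0 < 1 - γ := by linarith
  simp only [Md, Matrix.of_apply]
  positivity

lemma Md_sum {n : ℕ} {C : Matrix (Fin n) (Fin n) ℝ} (hC : ∀ i j, 0 < C i j)
    {d : Fin n → ℝ} (hd : ∀ i, 0 < d i) {γ : ℝ}
    {g₁ g₁' g₂ g₂' : ℝ → ℝ} (hg₁ : IsWeight g₁ g₁') (hg₂ : IsWeight g₂ g₂')
    {x : Fin n → ℝ} (hx : x ∈ stdSimplex ℝ (Fin n)) (i : Fin n) :
    ∑ j, Md C d γ g₁ g₂ x i j = 1 := by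
  have : Nonempty (Fin n) := ⟨i⟩
  have p1 : ∀ k, 0 < g₁ (x k) := fun k => hg₁.2.2.2.1 _ (simplex_Icc hx k)
  have p2 : ∀ k, 0 < g₂ (x k) := fun k => hg₂.2.2.2.1 _ (simplex_Icc hx k)
  have s1 : 0 < ∑ k, C i k * g₁ (x k) :=
    Finset.sum_pos (fun k _ => mul_pos (hC i k) (p1 k)) Finset.univ_nonempty
  have s2 : 0 < ∑ k, d k * g₂ (x k) :=
    Finset.sum_pos (fun k _ => mul_pos (hd k) (p2 k)) Finset.univ_nonempty
  simp only [Md, Matrix.of_apply]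
  rw [Finset.sum_add_distrib, ← Finset.mul_sum, ← Finset.mul_sum, ← Finset.sum_div,
    ← Finset.sum_div, div_self s1.ne', div_self s2.ne']
  ring

lemma vecMul_pos' {n : ℕ} [Nonempty (Fin n)] {A : Matrix (Fin n) (Fin n) ℝ}
    (hA : ∀ i j, 0 < A i j) {x : Fin n → ℝ} (hx : ∀ i, 0 < x i) (j : Fin n) :
    0 < Matrix.vecMul x A j := by
  simp only [Matrix.vecMul, dotProduct]
  exact Finset.sum_pos (fun k _ => mul_pos (hx k) (hA k j)) Finset.univ_nonempty

lemma vecMul_sum' {n : ℕ} {A : Matrix (Fin n) (Fin n) ℝ}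
    (hA : ∀ i, ∑ j, A i j = 1) (x : Fin n → ℝ) :
    ∑ j, Matrix.vecMul x A j = ∑ i, x i := by
  simp only [Matrix.vecMul, dotProduct]
  rw [Finset.sum_comm]
  refine Finset.sum_congr rfl fun i _ => ?_
  rw [← Finset.mul_sum, hA, mul_one]

lemma fd_simplex {n : ℕ} [Nonempty (Fin n)] {C : Matrix (Fin n) (Fin n) ℝ} (hC : ∀ i j, 0 < C i j)
    {d : Fin n → ℝ} (hd : ∀ i, 0 < d i) {γ : ℝ} (hγ0 : 0 < γ) (hγ1 : γ < 1)
    {g₁ g₁' g₂ g₂' : ℝ → ℝ} (hg₁ : IsWeight g₁ g₁') (hg₂ : IsWeight g₂ g₂')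
    {x : Fin n → ℝ} (hx : x ∈ stdSimplex ℝ (Fin n)) (hx0 : ∀ i, 0 < x i) :
    fd C d γ g₁ g₂ x ∈ stdSimplex ℝ (Fin n) ∧ ∀ i, 0 < fd C d γ g₁ g₂ x i := by
  have h := vecMul_pos' (Md_pos hC hd hγ0 hγ1 hg₁ hg₂ hx) hx0
  refine ⟨⟨fun i => (h i).le, ?_⟩, h⟩
  have := vecMul_sum' (Md_sum (γ := γ) hC hd hg₁ hg₂ hx) x
  rw [hx.2] at this
  exact this

/-- Birkhoff contraction in usable form. -/
lemma birkhoff_le {n : ℕ} [Nonempty (Fin n)] {C : Matrix (Fin n) (Fin n) ℝ}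
    (hC : ∀ i j, 0 < C i j) {τ : ℝ} (hτ : IsLUB (birkhoffRatios C) τ)
    {u v : Fin n → ℝ} (hu : ∀ i, 0 < u i) (hv : ∀ i, 0 < v i) :
    dH (Matrix.vecMul u C) (Matrix.vecMul v C) ≤ τ * dH u v := by
  rcases (dH_nonneg' hu hv).eq_or_lt with h0 | h0
  · rw [← h0, mul_zero]
    have i0 : Fin n := Classical.arbitrary _
    have hprop : u = (u i0 / v i0) • v := by
      funext i
      have h1 := le_dH hu hv i i0
      have h2 := le_dH hu hv i0 i
      rw [← h0] at h1 h2
      have h3 : Real.log (u i / v i) = Real.log (u i0 / v i0) := by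
        rw [Real.log_div (hu i).ne' (hv i).ne', Real.log_div (hu i0).ne' (hv i0).ne']
        linarith
      have h4 := Real.log_injOn_pos (div_pos (hu i) (hv i)) (div_pos (hu i0) (hv i0)) h3
      rw [Pi.smul_apply, smul_eq_mul, ← h4, div_mul_cancel₀ _ (hv i).ne']
    have hc : 0 < u i0 / v i0 := div_pos (hu i0) (hv i0)
    refine dH_le (vecMul_pos' hC hu) (vecMul_pos' hC hv) fun i j => ?_
    have e : ∀ k, Real.log (Matrix.vecMul u C k) - Real.log (Matrix.vecMul v C k) =
        Real.log (u i0 / v i0) := by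
      intro k
      rw [hprop, Matrix.smul_vecMul, Pi.smul_apply, smul_eq_mul,
        Real.log_mul hc.ne' (vecMul_pos' hC hv k).ne']
      simp [(hv i0).ne']
    rw [e, e, sub_self]
  · rw [← div_le_iff₀ h0]
    refine hτ.1 ⟨u, v, hu, hv, fun c hc => ?_, rfl⟩
    have i0 : Fin n := Classical.arbitrary _
    have hc0 : 0 < c := by
      have := hu i0
      rw [hc, Pi.smul_apply, smul_eq_mul] at this
      exact pos_of_mul_pos_left this (hv i0).le
    have : dH u v ≤ 0 := by
      refine dH_le hu hv fun i j => ?_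
      have e : ∀ k, Real.log (u k) - Real.log (v k) = Real.log c := by
        intro k
        rw [hc, Pi.smul_apply, smul_eq_mul, Real.log_mul hc0.ne' (hv k).ne']
        ring
      rw [e, e, sub_self]
    linarith

lemma tau_nonneg {n : ℕ} [Nonempty (Fin n)] {C : Matrix (Fin n) (Fin n) ℝ}
    (hC : ∀ i j, 0 < C i j) {τ : ℝ} (hτ : IsLUB (birkhoffRatios C) τ) : 0 ≤ τ := by
  obtain ⟨r, hr⟩ := hτ.nonempty
  refine le_trans ?_ (hτ.1 hr)
  obtain ⟨x, y, hx, hy, -, rfl⟩ := hr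
  exact div_nonneg (dH_nonneg' (vecMul_pos' hC hx) (vecMul_pos' hC hy)) (dH_nonneg' hx hy)

lemma log_le_of_le_exp {p q a : ℝ} (hp : 0 < p) (hq : 0 < q) :
    Real.log p - Real.log q ≤ a ↔ p ≤ Real.exp a * q := by
  rw [← Real.log_le_log_iff hp (mul_pos (Real.exp_pos _) hq),
    Real.log_mul (Real.exp_pos _).ne' hq.ne', Real.log_exp]
  constructor <;> intro h <;> linarith

/-- Fixed matrix step. -/
lemma step_fixed {n : ℕ} [Nonempty (Fin n)] {C : Matrix (Fin n) (Fin n) ℝ}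
    (hC : ∀ i j, 0 < C i j)
    {d : Fin n → ℝ} (hd : ∀ i, 0 < d i) {γ : ℝ} (hγ0 : 0 < γ) (hγ1 : γ < 1)
    {g₁ g₁' g₂ g₂' : ℝ → ℝ} (hg₁ : IsWeight g₁ g₁') (hg₂ : IsWeight g₂ g₂')
    {τ : ℝ} (hτ : IsLUB (birkhoffRatios C) τ)
    {z x y : Fin n → ℝ} (hz : z ∈ stdSimplex ℝ (Fin n))
    (hx : x ∈ stdSimplex ℝ (Fin n)) (hx0 : ∀ i, 0 < x i)
    (hy : y ∈ stdSimplex ℝ (Fin n)) (hy0 : ∀ i, 0 < y i) :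
    dH (Matrix.vecMul x (Md C d γ g₁ g₂ z)) (Matrix.vecMul y (Md C d γ g₁ g₂ z)) ≤
      τ * dH x y := by
  have p1 : ∀ k, 0 < g₁ (z k) := fun k => hg₁.2.2.2.1 _ (simplex_Icc hz k)
  have p2 : ∀ k, 0 < g₂ (z k) := fun k => hg₂.2.2.2.1 _ (simplex_Icc hz k)
  have s1 : ∀ i, 0 < ∑ k, C i k * g₁ (z k) := fun i =>
    Finset.sum_pos (fun k _ => mul_pos (hC i k) (p1 k)) Finset.univ_nonempty
  have s2 : 0 < ∑ k, d k * g₂ (z k) :=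
    Finset.sum_pos (fun k _ => mul_pos (hd k) (p2 k)) Finset.univ_nonempty
  set S : Matrix (Fin n) (Fin n) ℝ :=
    Matrix.of fun i j => C i j * g₁ (z j) / ∑ k, C i k * g₁ (z k) with hS
  have hSpos : ∀ i j, 0 < S i j := fun i j => div_pos (mul_pos (hC i j) (p1 j)) (s1 i)
  have hSsum : ∀ i, ∑ j, S i j = 1 := fun i => by
    simp only [hS, Matrix.of_apply]
    rw [← Finset.sum_div, div_self (s1 i).ne']
  set p : Fin n → ℝ := fun j => d j * g₂ (z j) / ∑ k, d k * g₂ (z k) with hp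
  have hppos : ∀ j, 0 < p j := fun j => div_pos (mul_pos (hd j) (p2 j)) s2
  have hexp : ∀ w ∈ stdSimplex ℝ (Fin n), ∀ j, Matrix.vecMul w (Md C d γ g₁ g₂ z) j =
      γ * Matrix.vecMul w S j + (1 - γ) * p j := by
    intro w hw j
    have hM : ∀ i, Md C d γ g₁ g₂ z i j = γ * S i j + (1 - γ) * p j := fun i => rfl
    simp only [Matrix.vecMul, dotProduct, hM, mul_add, Finset.sum_add_distrib]
    rw [← Finset.sum_mul, hw.2, one_mul, Finset.mul_sum]
    congr 1
    exact Finset.sum_congr rfl fun i _ => by ring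
  -- the stochastic part
  have hST : dH (Matrix.vecMul x S) (Matrix.vecMul y S) ≤ τ * dH x y := by
    have hfac : ∀ w : Fin n → ℝ, ∀ j, Matrix.vecMul w S j =
        Matrix.vecMul (fun i => w i / ∑ k, C i k * g₁ (z k)) C j * g₁ (z j) := by
      intro w j
      simp only [Matrix.vecMul, dotProduct, hS, Matrix.of_apply, Finset.sum_mul]
      refine Finset.sum_congr rfl fun i _ => ?_
      ring
    have hu0 : ∀ i, 0 < x i / ∑ k, C i k * g₁ (z k) := fun i => div_pos (hx0 i) (s1 i)
    have hv0 : ∀ i, 0 < y i / ∑ k, C i k * g₁ (z k) := fun i => div_pos (hy0 i) (s1 i)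
    have hb := birkhoff_le hC hτ hu0 hv0
    have hA : dH (fun i => x i / ∑ k, C i k * g₁ (z k)) (fun i => y i / ∑ k, C i k * g₁ (z k)) ≤
        dH x y := by
      refine dH_le hu0 hv0 fun i j => ?_
      have := le_dH hx0 hy0 i j
      rw [Real.log_div (hx0 i).ne' (s1 i).ne', Real.log_div (hx0 j).ne' (s1 j).ne',
        Real.log_div (hy0 i).ne' (s1 i).ne', Real.log_div (hy0 j).ne' (s1 j).ne']
      linarith
    refine le_trans ?_ (hb.trans (mul_le_mul_of_nonneg_left hA (tau_nonneg hC hτ)))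
    refine dH_le (vecMul_pos' hSpos hx0) (vecMul_pos' hSpos hy0) fun i j => ?_
    have := le_dH (vecMul_pos' hC hu0) (vecMul_pos' hC hv0) i j
    rw [hfac x i, hfac x j, hfac y i, hfac y j,
      Real.log_mul (vecMul_pos' hC hu0 i).ne' (p1 i).ne',
      Real.log_mul (vecMul_pos' hC hu0 j).ne' (p1 j).ne',
      Real.log_mul (vecMul_pos' hC hv0 i).ne' (p1 i).ne',
      Real.log_mul (vecMul_pos' hC hv0 j).ne' (p1 j).ne']
    linarith
  refine le_trans ?_ hST
  have hP := vecMul_pos' hSpos hx0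
  have hQ := vecMul_pos' hSpos hy0
  obtain ⟨a, b, ha, hb, hab, h1, h2⟩ := exists_ab hP hQ
    (by rw [vecMul_sum' hSsum, vecMul_sum' hSsum, hx.2, hy.2])
  refine le_trans ?_ hab
  have hMp := Md_pos hC hd hγ0 hγ1 hg₁ hg₂ hz
  have hP' := vecMul_pos' hMp hx0
  have hQ' := vecMul_pos' hMp hy0
  have aux : ∀ {P Q r c : ℝ}, 0 ≤ c → 0 < r → P ≤ Real.exp c * Q →
      γ * P + (1 - γ) * r ≤ Real.exp c * (γ * Q + (1 - γ) * r) := by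
    intro P Q r c hc hr h
    have e1 : 1 ≤ Real.exp c := Real.one_le_exp hc
    have e2 : γ * P ≤ γ * (Real.exp c * Q) := by gcongr
    have e3 : 0 < (1 - γ) * r := mul_pos (by linarith) hr
    nlinarith
  refine dH_le hP' hQ' fun i j => ?_
  have k1 : Real.log (Matrix.vecMul x (Md C d γ g₁ g₂ z) i) -
      Real.log (Matrix.vecMul y (Md C d γ g₁ g₂ z) i) ≤ a := by
    rw [log_le_of_le_exp (hP' i) (hQ' i), hexp x hx, hexp y hy]
    exact aux ha (hppos i) ((log_le_of_le_exp (hP i) (hQ i)).1 (h1 i))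
  have k2 : Real.log (Matrix.vecMul y (Md C d γ g₁ g₂ z) j) -
      Real.log (Matrix.vecMul x (Md C d γ g₁ g₂ z) j) ≤ b := by
    rw [log_le_of_le_exp (hQ' j) (hP' j), hexp x hx, hexp y hy]
    exact aux hb (hppos j) ((log_le_of_le_exp (hQ j) (hP j)).1 (h2 j))
  linarith

lemma Md_le {n : ℕ} {C : Matrix (Fin n) (Fin n) ℝ}
    (hC : ∀ i j, 0 < C i j)
    {d : Fin n → ℝ} (hd : ∀ i, 0 < d i) {γ : ℝ} (hγ0 : 0 < γ) (hγ1 : γ < 1)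
    {g₁ g₁' g₂ g₂' : ℝ → ℝ} (hg₁ : IsWeight g₁ g₁') (hg₂ : IsWeight g₂ g₂')
    {Lp₁ Lp₂ : ℝ} (hLp₁ : IsGreatest (ratioSet g₁ g₁') Lp₁)
    (hLp₂ : IsGreatest (ratioSet g₂ g₂') Lp₂) {x y : Fin n → ℝ}
    (hx : x ∈ stdSimplex ℝ (Fin n)) (hy : y ∈ stdSimplex ℝ (Fin n))
    {a b : ℝ} (ha : 0 ≤ a) (hb : 0 ≤ b) (h1 : ∀ i, x i - y i ≤ a) (h2 : ∀ i, y i - x i ≤ b)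
    (i j : Fin n) :
    Md C d γ g₁ g₂ x i j ≤ Real.exp ((Lp₁ + Lp₂) * (a + b)) * Md C d γ g₁ g₂ y i j := by
  have L1 := L_nonneg hg₁ hLp₁
  have L2 := L_nonneg hg₂ hLp₂
  have : Nonempty (Fin n) := ⟨j⟩
  have px1 : ∀ k, 0 < g₁ (x k) := fun k => hg₁.2.2.2.1 _ (simplex_Icc hx k)
  have px2 : ∀ k, 0 < g₂ (x k) := fun k => hg₂.2.2.2.1 _ (simplex_Icc hx k)
  have py1 : ∀ k, 0 < g₁ (y k) := fun k => hg₁.2.2.2.1 _ (simplex_Icc hy k)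
  have py2 : ∀ k, 0 < g₂ (y k) := fun k => hg₂.2.2.2.1 _ (simplex_Icc hy k)
  have s1 : 0 < ∑ k, C i k * g₁ (y k) :=
    Finset.sum_pos (fun k _ => mul_pos (hC i k) (py1 k)) Finset.univ_nonempty
  have s2 : 0 < ∑ k, d k * g₂ (y k) :=
    Finset.sum_pos (fun k _ => mul_pos (hd k) (py2 k)) Finset.univ_nonempty
  have r1 := row_le (c := C i) (hC i) px1 py1
    (fun k => weight_le hg₁ hLp₁ (simplex_Icc hx k) (simplex_Icc hy k) ha (h1 k))
    (fun k => weight_le hg₁ hLp₁ (simplex_Icc hy k) (simplex_Icc hx k) hb (h2 k)) j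
  have r2 := row_le hd px2 py2
    (fun k => weight_le hg₂ hLp₂ (simplex_Icc hx k) (simplex_Icc hy k) ha (h1 k))
    (fun k => weight_le hg₂ hLp₂ (simplex_Icc hy k) (simplex_Icc hx k) hb (h2 k)) j
  have q1 : 0 ≤ C i j * g₁ (y j) / ∑ k, C i k * g₁ (y k) :=
    (div_pos (mul_pos (hC i j) (py1 j)) s1).le
  have q2 : 0 ≤ d j * g₂ (y j) / ∑ k, d k * g₂ (y k) :=
    (div_pos (mul_pos (hd j) (py2 j)) s2).le
  have e1 : Real.exp (Lp₁ * a + Lp₁ * b) ≤ Real.exp ((Lp₁ + Lp₂) * (a + b)) := by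
    apply Real.exp_le_exp.2; nlinarith [mul_nonneg L2 ha, mul_nonneg L2 hb]
  have e2 : Real.exp (Lp₂ * a + Lp₂ * b) ≤ Real.exp ((Lp₁ + Lp₂) * (a + b)) := by
    apply Real.exp_le_exp.2; nlinarith [mul_nonneg L1 ha, mul_nonneg L1 hb]
  have r1' := r1.trans (mul_le_mul_of_nonneg_right e1 q1)
  have r2' := r2.trans (mul_le_mul_of_nonneg_right e2 q2)
  have t1 := mul_le_mul_of_nonneg_left r1' hγ0.le
  have t2 := mul_le_mul_of_nonneg_left r2' (sub_nonneg.2 hγ1.le)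
  simp only [Md, Matrix.of_apply]
  linarith

lemma fd_contract {n : ℕ} [Nonempty (Fin n)] {C : Matrix (Fin n) (Fin n) ℝ}
    (hC : ∀ i j, 0 < C i j)
    {d : Fin n → ℝ} (hd : ∀ i, 0 < d i) {γ : ℝ} (hγ0 : 0 < γ) (hγ1 : γ < 1)
    {g₁ g₁' g₂ g₂' : ℝ → ℝ} (hg₁ : IsWeight g₁ g₁') (hg₂ : IsWeight g₂ g₂')
    {Lp₁ Lp₂ : ℝ} (hLp₁ : IsGreatest (ratioSet g₁ g₁') Lp₁)
    (hLp₂ : IsGreatest (ratioSet g₂ g₂') Lp₂)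
    {τ : ℝ} (hτ : IsLUB (birkhoffRatios C) τ) {x y : Fin n → ℝ}
    (hx : x ∈ stdSimplex ℝ (Fin n)) (hx0 : ∀ i, 0 < x i)
    (hy : y ∈ stdSimplex ℝ (Fin n)) (hy0 : ∀ i, 0 < y i) :
    dH (fd C d γ g₁ g₂ x) (fd C d γ g₁ g₂ y) ≤ (τ + 2 * (Lp₁ + Lp₂)) * dH x y := by
  have L1 := L_nonneg hg₁ hLp₁
  have L2 := L_nonneg hg₂ hLp₂
  obtain ⟨a, b, ha, hb, hab, h1, h2⟩ := exists_ab hx0 hy0 (by rw [hx.2, hy.2])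
  have h1' : ∀ i, x i - y i ≤ a := fun i =>
    sub_le_of_log (hx0 i) (hy0 i) (simplex_Icc hx i).2 ha (h1 i)
  have h2' : ∀ i, y i - x i ≤ b := fun i =>
    sub_le_of_log (hy0 i) (hx0 i) (simplex_Icc hy i).2 hb (h2 i)
  have hMx := Md_pos hC hd hγ0 hγ1 hg₁ hg₂ hx
  have hMy := Md_pos hC hd hγ0 hγ1 hg₁ hg₂ hy
  have hst := step_fixed hC hd hγ0 hγ1 hg₁ hg₂ hτ hx hx hx0 hy hy0
  have X := vecMul_pos' hMx hx0
  have Z := vecMul_pos' hMx hy0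
  have Y := vecMul_pos' hMy hy0
  have LL : (Lp₁ + Lp₂) * (a + b) ≤ (Lp₁ + Lp₂) * dH x y := by gcongr
  have z1 : ∀ j, Real.log (Matrix.vecMul y (Md C d γ g₁ g₂ x) j) -
      Real.log (Matrix.vecMul y (Md C d γ g₁ g₂ y) j) ≤ (Lp₁ + Lp₂) * (a + b) := by
    intro j
    rw [log_le_of_le_exp (Z j) (Y j)]
    simp only [Matrix.vecMul, dotProduct, Finset.mul_sum]
    refine Finset.sum_le_sum fun i _ => ?_
    have := mul_le_mul_of_nonneg_left
      (Md_le hC hd hγ0 hγ1 hg₁ hg₂ hLp₁ hLp₂ hx hy ha hb h1' h2' i j) (hy0 i).le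
    linarith
  have z2 : ∀ j, Real.log (Matrix.vecMul y (Md C d γ g₁ g₂ y) j) -
      Real.log (Matrix.vecMul y (Md C d γ g₁ g₂ x) j) ≤ (Lp₁ + Lp₂) * (a + b) := by
    intro j
    rw [log_le_of_le_exp (Y j) (Z j)]
    simp only [Matrix.vecMul, dotProduct, Finset.mul_sum]
    refine Finset.sum_le_sum fun i _ => ?_
    have := mul_le_mul_of_nonneg_left
      (Md_le hC hd hγ0 hγ1 hg₁ hg₂ hLp₁ hLp₂ hy hx hb ha h2' h1' i j) (hy0 i).le
    rw [add_comm b a] at this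
    linarith
  refine dH_le X Y fun i j => ?_
  have := le_dH X Z i j
  have := z1 i
  have := z2 j
  linarith

/-- Coordinates differ by at most the Hilbert distance. -/
lemma dist_le_dH {n : ℕ} [Nonempty (Fin n)] {x y : Fin n → ℝ}
    (hx : x ∈ stdSimplex ℝ (Fin n)) (hx0 : ∀ i, 0 < x i)
    (hy : y ∈ stdSimplex ℝ (Fin n)) (hy0 : ∀ i, 0 < y i) : dist x y ≤ dH x y := by
  obtain ⟨a, b, ha, hb, hab, h1, h2⟩ := exists_ab hx0 hy0 (by rw [hx.2, hy.2])
  rw [dist_pi_le_iff (dH_nonneg' hx0 hy0)]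
  intro i
  rw [Real.dist_eq, abs_le]
  have := sub_le_of_log (hx0 i) (hy0 i) (simplex_Icc hx i).2 ha (h1 i)
  have := sub_le_of_log (hy0 i) (hx0 i) (simplex_Icc hy i).2 hb (h2 i)
  constructor <;> linarith

/-- Uniform lower bound for the image. -/
lemma fd_lower {n : ℕ} {C : Matrix (Fin n) (Fin n) ℝ}
    (hC : ∀ i j, 0 < C i j)
    {d : Fin n → ℝ} (hd : ∀ i, 0 < d i) {γ : ℝ} (hγ0 : 0 < γ) (hγ1 : γ < 1)
    {g₁ g₁' g₂ g₂' : ℝ → ℝ} (hg₁ : IsWeight g₁ g₁') (hg₂ : IsWeight g₂ g₂')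
    {Lp₁ Lp₂ : ℝ} (hLp₁ : IsGreatest (ratioSet g₁ g₁') Lp₁)
    (hLp₂ : IsGreatest (ratioSet g₂ g₂') Lp₂) (x0 : Fin n → ℝ)
    (hx0 : x0 ∈ stdSimplex ℝ (Fin n)) (j : Fin n) :
    ∃ ε > 0, ∀ x ∈ stdSimplex ℝ (Fin n), ε ≤ fd C d γ g₁ g₂ x j := by
  have : Nonempty (Fin n) := ⟨j⟩
  have hp := Md_pos hC hd hγ0 hγ1 hg₁ hg₂ hx0
  obtain ⟨i, hi⟩ := Finite.exists_min (fun i => Md C d γ g₁ g₂ x0 i j)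
  refine ⟨Real.exp (-((Lp₁ + Lp₂) * (1 + 1))) * Md C d γ g₁ g₂ x0 i j,
    mul_pos (Real.exp_pos _) (hp i j), fun x hx => ?_⟩
  have hk : ∀ k, Real.exp (-((Lp₁ + Lp₂) * (1 + 1))) * Md C d γ g₁ g₂ x0 i j ≤
      Md C d γ g₁ g₂ x k j := by
    intro k
    have h := Md_le hC hd hγ0 hγ1 hg₁ hg₂ hLp₁ hLp₂ hx0 hx (zero_le_one) (zero_le_one)
      (fun i => by linarith [(simplex_Icc hx0 i).2, (simplex_Icc hx i).1])
      (fun i => by linarith [(simplex_Icc hx i).2, (simplex_Icc hx0 i).1]) k j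
    rw [Real.exp_neg, inv_mul_le_iff₀ (Real.exp_pos _)]
    exact (hi k).trans h
  simp only [fd, Matrix.vecMul, dotProduct]
  calc _ = ∑ k, x k * (Real.exp (-((Lp₁ + Lp₂) * (1 + 1))) * Md C d γ g₁ g₂ x0 i j) := by
        rw [← Finset.sum_mul, hx.2, one_mul]
    _ ≤ _ := Finset.sum_le_sum fun k _ => mul_le_mul_of_nonneg_left (hk k) (hx.1 k)

lemma dH_tendsto {n : ℕ} [Nonempty (Fin n)] {u : ℕ → Fin n → ℝ} {x : Fin n → ℝ}
    (hu : ∀ s i, 0 < u s i) (hx : ∀ i, 0 < x i) (h : Tendsto u atTop (𝓝 x)) :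
    Tendsto (fun s => dH (u s) x) atTop (𝓝 0) := by
  have hl : ∀ i, Tendsto (fun s => Real.log (u s i) - Real.log (x i)) atTop (𝓝 0) := by
    intro i
    have h1 := ((tendsto_pi_nhds.1 h i).log (hx i).ne').sub_const (Real.log (x i))
    rwa [sub_self] at h1
  have hsum : Tendsto (fun s => 2 * ∑ i, |Real.log (u s i) - Real.log (x i)|) atTop (𝓝 0) := by
    have := (tendsto_finsetSum Finset.univ (fun i _ => (hl i).abs)).const_mul 2
    simpa using this
  refine squeeze_zero (fun s => dH_nonneg' (hu s) hx) (fun s => ?_) hsum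
  refine dH_le (hu s) hx fun i j => ?_
  have hi := Finset.single_le_sum (f := fun i => |Real.log (u s i) - Real.log (x i)|)
    (fun k _ => abs_nonneg _) (Finset.mem_univ i)
  have hj := Finset.single_le_sum (f := fun i => |Real.log (u s i) - Real.log (x i)|)
    (fun k _ => abs_nonneg _) (Finset.mem_univ j)
  have := le_abs_self (Real.log (u s i) - Real.log (x i))
  have := neg_abs_le (Real.log (u s j) - Real.log (x j))
  linarith

theorem damped_fd_contraction_unique_fixed_point
    (n : ℕ) (hn : 0 < n) (C : Matrix (Fin n) (Fin n) ℝ)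
    (hCpos : ∀ i j, 0 < C i j)
    (d : Fin n → ℝ) (hd : ∀ i, 0 < d i)
    (γ : ℝ) (hγ0 : 0 < γ) (hγ1 : γ < 1)
    (g₁ g₁' g₂ g₂' : ℝ → ℝ) (hg₁ : IsWeight g₁ g₁') (hg₂ : IsWeight g₂ g₂')
    (Lp₁ Lp₂ : ℝ) (hLp₁ : IsGreatest (ratioSet g₁ g₁') Lp₁)
    (hLp₂ : IsGreatest (ratioSet g₂ g₂') Lp₂)
    (τ : ℝ) (hτ : IsLUB (birkhoffRatios C) τ)
    (hsmall : 2 * (Lp₁ + Lp₂) < 1 - τ) :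
    ∃ xs ∈ stdSimplex ℝ (Fin n), (∀ i, 0 < xs i) ∧ fd C d γ g₁ g₂ xs = xs ∧
      (∀ y ∈ stdSimplex ℝ (Fin n), (∀ i, 0 < y i) → fd C d γ g₁ g₂ y = y → y = xs) ∧
      ∀ x ∈ stdSimplex ℝ (Fin n), (∀ i, 0 < x i) →
        Tendsto (fun s : ℕ => (fd C d γ g₁ g₂)^[s] x) atTop (𝓝 xs) := by
  have : Nonempty (Fin n) := ⟨⟨0, hn⟩⟩
  set f := fd C d γ g₁ g₂ with hf
  set κ := τ + 2 * (Lp₁ + Lp₂) with hκ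
  have hκ0 : 0 ≤ κ := by
    have := tau_nonneg hCpos hτ
    have := L_nonneg hg₁ hLp₁
    have := L_nonneg hg₂ hLp₂
    positivity
  have hκ1 : κ < 1 := by linarith
  have hmap : ∀ x ∈ stdSimplex ℝ (Fin n), (∀ i, 0 < x i) →
      f x ∈ stdSimplex ℝ (Fin n) ∧ ∀ i, 0 < f x i := fun x hx hx0 =>
    fd_simplex hCpos hd hγ0 hγ1 hg₁ hg₂ hx hx0
  have hcon : ∀ x ∈ stdSimplex ℝ (Fin n), (∀ i, 0 < x i) → ∀ y ∈ stdSimplex ℝ (Fin n),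
      (∀ i, 0 < y i) → dH (f x) (f y) ≤ κ * dH x y := fun x hx hx0 y hy hy0 =>
    fd_contract hCpos hd hγ0 hγ1 hg₁ hg₂ hLp₁ hLp₂ hτ hx hx0 hy hy0
  have hit : ∀ x ∈ stdSimplex ℝ (Fin n), (∀ i, 0 < x i) → ∀ s : ℕ,
      f^[s] x ∈ stdSimplex ℝ (Fin n) ∧ ∀ i, 0 < f^[s] x i := by
    intro x hx hx0 s
    induction s with
    | zero => exact ⟨hx, hx0⟩
    | succ s ih =>
      rw [Function.iterate_succ_apply']
      exact hmap _ ih.1 ih.2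
  have hitd : ∀ x ∈ stdSimplex ℝ (Fin n), (∀ i, 0 < x i) → ∀ y ∈ stdSimplex ℝ (Fin n),
      (∀ i, 0 < y i) → ∀ s : ℕ, dH (f^[s] x) (f^[s] y) ≤ dH x y * κ ^ s := by
    intro x hx hx0 y hy hy0 s
    induction s with
    | zero => simp
    | succ s ih =>
      rw [Function.iterate_succ_apply', Function.iterate_succ_apply']
      have h1 := hit x hx hx0 s
      have h2 := hit y hy hy0 s
      refine (hcon _ h1.1 h1.2 _ h2.1 h2.2).trans ?_
      calc κ * dH (f^[s] x) (f^[s] y) ≤ κ * (dH x y * κ ^ s) := by gcongr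
        _ = _ := by ring
  -- start point
  have hn' : (0 : ℝ) < n := by exact_mod_cast hn
  obtain ⟨x0, hx0, hx0p⟩ : ∃ x0 ∈ stdSimplex ℝ (Fin n), ∀ i, 0 < x0 i := by
    refine ⟨fun _ => 1 / (n : ℝ), ⟨fun i => by positivity, ?_⟩, fun i => by positivity⟩
    simp [hn'.ne']
  have hcauchy : CauchySeq (fun s : ℕ => f^[s] x0) := by
    refine cauchySeq_of_le_geometric κ (dH x0 (f x0)) hκ1 fun s => ?_
    have h1 := hit x0 hx0 hx0p s
    have h2 := hit x0 hx0 hx0p (s + 1)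
    refine (dist_le_dH h1.1 h1.2 h2.1 h2.2).trans ?_
    rw [Function.iterate_succ_apply]
    have h3 := hmap x0 hx0 hx0p
    exact hitd x0 hx0 hx0p _ h3.1 h3.2 s
  obtain ⟨xs, hxs⟩ := cauchySeq_tendsto_of_complete hcauchy
  have hxs_mem : xs ∈ stdSimplex ℝ (Fin n) :=
    (isClosed_stdSimplex ℝ (Fin n)).mem_of_tendsto hxs
      (Eventually.of_forall fun s => (hit x0 hx0 hx0p s).1)
  have hxs' := hxs.comp (tendsto_add_atTop_nat 1)
  have hxs_pos : ∀ i, 0 < xs i := by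
    intro i
    obtain ⟨ε, hε, h⟩ := fd_lower hCpos hd hγ0 hγ1 hg₁ hg₂ hLp₁ hLp₂ x0 hx0 i
    refine hε.trans_le (ge_of_tendsto (tendsto_pi_nhds.1 hxs' i) (Eventually.of_forall fun s => ?_))
    simp only [Function.comp, Function.iterate_succ_apply']
    exact h _ (hit x0 hx0 hx0p s).1
  have hfxs := hmap xs hxs_mem hxs_pos
  have hfix : f xs = xs := by
    refine tendsto_nhds_unique ?_ hxs'
    rw [tendsto_iff_dist_tendsto_zero]
    have hd0 := dH_tendsto (fun s => (hit x0 hx0 hx0p s).2) hxs_pos hxs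
    have hd1 := hd0.const_mul κ
    rw [mul_zero] at hd1
    refine squeeze_zero (fun s => dist_nonneg) (fun s => ?_) hd1
    have h1 := hit x0 hx0 hx0p s
    have h2 := hit x0 hx0 hx0p (s + 1)
    refine (dist_le_dH h2.1 h2.2 hfxs.1 hfxs.2).trans ?_
    rw [Function.iterate_succ_apply']
    exact hcon _ h1.1 h1.2 _ hxs_mem hxs_pos
  have hconv : ∀ x ∈ stdSimplex ℝ (Fin n), (∀ i, 0 < x i) →
        Tendsto (fun s : ℕ => f^[s] x) atTop (𝓝 xs) := by
    intro x hx hxp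
    rw [tendsto_iff_dist_tendsto_zero]
    have hg := (tendsto_pow_atTop_nhds_zero_of_lt_one hκ0 hκ1).const_mul (dH x xs)
    rw [mul_zero] at hg
    refine squeeze_zero (fun s => dist_nonneg) (fun s => ?_) hg
    have h1 := hit x hx hxp s
    refine (dist_le_dH h1.1 h1.2 hxs_mem hxs_pos).trans ?_
    have := hitd x hx hxp xs hxs_mem hxs_pos s
    rwa [Function.iterate_fixed hfix] at this
  refine ⟨xs, hxs_mem, hxs_pos, hfix, fun y hy hyp hfy => ?_, hconv⟩
  have := hconv y hy hyp
  simp only [Function.iterate_fixed hfy] at this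
  exact tendsto_nhds_unique tendsto_const_nhds this
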